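/- Let K = (k_1,…,k_r) be positive integers, not all equal to 1, and let B = {j ∈ {1,…,r} : k_j = 1}. Then in ℝ[T]: Σ_{Π ∈ P(r)} c̄(Π) · H(K;Π;T) = Σ_{A ⊆ B} Σ_{Δ ∈ P_B({1,…,r}∖A)} c̄(Δ) · (∏_{Q ∈ Δ} ζ(Σ_{q ∈ Q} k_q)) · G_{|A|}(T), where for s ≥ 0, G_s(T) = s! · Σ (∏_{m=2}^{s} (ζ(m)/m)^{i_m} / i_m!) · T^j / j!, the sum over all tuples (j, i_2, …, i_s) of nonnegative integers with j + Σ_{m=2}^s m·i_m = s (G_s(T) is the polynomial ρ̄^{-1}(T^s)). -/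

import Mathlib

open Finset

open scoped Classical

/-- The Riemann zeta value `ζ(m) = Σ_{n ≥ 1} 1/n^m`. -/
noncomputable def zetaVal (m : ℕ) : ℝ := ∑' n : ℕ, 1 / ((n : ℝ) + 1) ^ m

/-- `E(k;T) ∈ ℝ[T]`: the constant polynomial `ζ(k)` if `k ≥ 2`, the variable `T` if `k = 1`. -/
noncomputable def Epoly (k : ℕ) : Polynomial ℝ :=
  if k = 1 then Polynomial.X else Polynomial.C (zetaVal k)

/-- The set of partitions of a finite set `S`: sets of nonempty pairwise disjoint
subsets (blocks) of `S` whose union is `S`. -/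
noncomputable def partitionsOf {α : Type*} [DecidableEq α] (S : Finset α) :
    Finset (Finset (Finset α)) :=
  S.powerset.powerset.filter (fun π =>
    (∀ P ∈ π, P.Nonempty) ∧
    (∀ P ∈ π, ∀ Q ∈ π, P ≠ Q → Disjoint P Q) ∧
    π.biUnion id = S)

/-- `P_B(C)`: the set of partitions of `C` none of whose blocks is contained in `B`. -/
noncomputable def partitionsAvoiding {α : Type*} [DecidableEq α] (B C : Finset α) :
    Finset (Finset (Finset α)) :=
  (partitionsOf C).filter (fun Δ => ∀ Q ∈ Δ, ¬ Q ⊆ B)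

/-- `c̄(Π) = ∏_{P ∈ Π} (|P| - 1)!`, with `c̄(∅) = 1`. -/
def cbar {α : Type*} (π : Finset (Finset α)) : ℕ :=
  ∏ P ∈ π, (P.card - 1).factorial

/-- The harmonic-type polynomial `H(K;Π;T) = ∏_{P ∈ Π} E(Σ_{p ∈ P} k_p; T)`. -/
noncomputable def Hpoly {r : ℕ} (k : Fin r → ℕ) (π : Finset (Finset (Fin r))) :
    Polynomial ℝ :=
  ∏ P ∈ π, Epoly (∑ p ∈ P, k p)

/-- `G_s(T) = s! Σ (∏_{m=2}^s (ζ(m)/m)^{i_m}/i_m!) T^j/j!`, the sum over tuples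
`(j, i_2, …, i_s)` of nonnegative integers with `j + Σ_{m=2}^s m·i_m = s`
(this is the polynomial `ρ̄⁻¹(T^s)`).
Tuples are encoded as pairs `(j, i)` with `i : Fin (s+1) → ℕ` supported on indices
`m ≥ 2` (the values `i 0`, `i 1` are forced to be `0`); the bound `i m ≤ s` is
automatic, so ranging over `{0,…,s}` captures all tuples. -/
noncomputable def Gpoly (s : ℕ) : Polynomial ℝ :=
  (s.factorial : Polynomial ℝ) *
    ∑ j ∈ Finset.range (s + 1),
      ∑ i ∈ (Fintype.piFinset fun _ : Fin (s + 1) => Finset.range (s + 1)).filter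
          (fun i => (∀ m : Fin (s + 1), m.1 < 2 → i m = 0) ∧
            j + ∑ m : Fin (s + 1), m.1 * i m = s),
        (∏ m : Fin (s + 1),
            Polynomial.C ((zetaVal m.1 / (m.1 : ℝ)) ^ i m / ((i m).factorial : ℝ))) *
          (Polynomial.X ^ j * Polynomial.C ((j.factorial : ℝ)⁻¹))

/-!
A block of a partition of `{1, …, r}` either lies inside `B` or does not. Let `A` be the union of
the blocks inside `B`: the partition is then a partition of `A` together with one of the complement
all of whose blocks leave `B`, and `c̄` and `H` are multiplicative over this splitting. On a block
that leaves `B` the polynomial `E` is a zeta value, and on a block `P ⊆ B` it is `E(|P|; T)`, so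
everything reduces to `∑_{σ ∈ P(A)} c̄(σ) ∏_{P ∈ σ} E(|P|; T) = G_{|A|}(T)`.

For this exponential formula put `g_n = G_n / n!`. Both sides are governed by the recursion
`n g_n = ∑_{m=1}^n E(m; T) g_{n-m}`: on the left by singling out the block of a fixed element, on
the right because `∑ g_n x^n = exp (∑_m E(m; T) x^m / m)`, whose logarithmic derivative is
`∑_m E(m; T) x^(m-1)`.
-/

section Partitions

variable {α : Type*} [DecidableEq α] {S A B : Finset α} {π σ τ : Finset (Finset α)}

theorem mem_partitionsOf :
    π ∈ partitionsOf S ↔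
      (∀ P ∈ π, P.Nonempty) ∧ (π : Set (Finset α)).PairwiseDisjoint id ∧ π.biUnion id = S := by
  rw [partitionsOf, mem_filter]
  refine and_iff_right_of_imp fun ⟨_, _, hunion⟩ => mem_powerset.2 fun P hP => mem_powerset.2 ?_
  exact hunion ▸ subset_biUnion_of_mem id hP

theorem subset_of_mem_partitionsOf (hπ : π ∈ partitionsOf S) {P : Finset α} (hP : P ∈ π) :
    P ⊆ S :=
  (mem_partitionsOf.1 hπ).2.2 ▸ subset_biUnion_of_mem id hP

theorem exists_mem_block_of_mem_partitionsOf (hπ : π ∈ partitionsOf S) {a : α} (ha : a ∈ S) :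
    ∃ P ∈ π, a ∈ P := by
  rwa [← (mem_partitionsOf.1 hπ).2.2, mem_biUnion] at ha

theorem partitionsOf_empty : partitionsOf (∅ : Finset α) = {∅} := by
  ext π
  rw [mem_singleton, mem_partitionsOf]
  constructor
  · rintro ⟨hnonempty, -, hunion⟩
    refine eq_empty_of_forall_notMem fun P hP => (hnonempty P hP).ne_empty ?_
    exact subset_empty.1 (hunion ▸ subset_biUnion_of_mem id hP)
  · rintro rfl
    simp

theorem mem_partitionsOf_biUnion_of_subset (hπ : π ∈ partitionsOf S) (hτ : τ ⊆ π) :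
    τ ∈ partitionsOf (τ.biUnion id) := by
  rw [mem_partitionsOf] at hπ ⊢
  exact ⟨fun P hP => hπ.1 P (hτ hP), hπ.2.1.subset (coe_subset.2 hτ), rfl⟩

theorem sdiff_mem_partitionsOf (hπ : π ∈ partitionsOf S) (hτ : τ ⊆ π) :
    π \ τ ∈ partitionsOf (S \ τ.biUnion id) := by
  have hunion : S \ τ.biUnion id = (π \ τ).biUnion id := by
    obtain ⟨-, hdisj, rfl⟩ := mem_partitionsOf.1 hπ
    apply coe_injective
    push_cast
    refine Set.biUnion_sdiff_biUnion_eq ?_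
    rw [Set.union_eq_self_of_subset_right (coe_subset.2 hτ)]
    exact fun P hP Q hQ hPQ => disjoint_coe.2 (hdisj hP hQ hPQ)
  exact hunion ▸ mem_partitionsOf_biUnion_of_subset hπ sdiff_subset

theorem disjoint_of_mem_partitionsOf (hσ : σ ∈ partitionsOf A) (hτ : τ ∈ partitionsOf B)
    (hAB : Disjoint A B) : Disjoint σ τ := by
  refine disjoint_left.2 fun P hPσ hPτ => ((mem_partitionsOf.1 hσ).1 P hPσ).ne_empty ?_
  exact disjoint_self.1
    (hAB.mono (subset_of_mem_partitionsOf hσ hPσ) (subset_of_mem_partitionsOf hτ hPτ))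

theorem union_mem_partitionsOf (hσ : σ ∈ partitionsOf A) (hτ : τ ∈ partitionsOf B)
    (hAB : Disjoint A B) : σ ∪ τ ∈ partitionsOf (A ∪ B) := by
  have hcross : ∀ P ∈ σ, ∀ Q ∈ τ, P ≠ Q → Disjoint P Q := fun P hP Q hQ _ =>
    hAB.mono (subset_of_mem_partitionsOf hσ hP) (subset_of_mem_partitionsOf hτ hQ)
  rw [mem_partitionsOf] at *
  obtain ⟨hσ_nonempty, hσ_disj, rfl⟩ := hσ
  obtain ⟨hτ_nonempty, hτ_disj, rfl⟩ := hτ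
  refine ⟨fun P hP => (mem_union.1 hP).elim (hσ_nonempty P) (hτ_nonempty P), ?_, union_biUnion⟩
  rw [coe_union]
  exact Set.pairwiseDisjoint_union.2 ⟨hσ_disj, hτ_disj, hcross⟩

theorem filter_forall_mem_partitionsOf {a : α} (ha : a ∈ S) :
    {π ∈ partitionsOf S | ∀ P ∈ π, a ∈ P} = {{S}} := by
  ext π
  rw [mem_filter, mem_singleton]
  constructor
  · rintro ⟨hπ, hmem⟩
    obtain ⟨P, hP, haP⟩ := exists_mem_block_of_mem_partitionsOf hπ ha
    obtain ⟨-, hdisj, hunion⟩ := mem_partitionsOf.1 hπ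
    have hsingle : π = {P} := eq_singleton_iff_unique_mem.2
      ⟨hP, fun Q hQ => hdisj.elim_finset hQ hP a (hmem Q hQ) haP⟩
    rw [hsingle, singleton_biUnion, id] at hunion
    rw [hsingle, hunion]
  · rintro rfl
    simpa [mem_partitionsOf, ha] using ⟨a, ha⟩

end Partitions

section PartitionSum

variable {α R : Type*} [DecidableEq α] [CommSemiring R] {S A B : Finset α}

/-- The sum over all partitions of `S` of the product of the block weights `f`; in species
language, the value on `S` of the exponential of `f`. -/
noncomputable def partitionSum (f : Finset α → R) (S : Finset α) : R :=
  ∑ π ∈ partitionsOf S, ∏ P ∈ π, f P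

theorem partitionSum_congr {f g : Finset α → R} (h : ∀ P ⊆ S, f P = g P) :
    partitionSum f S = partitionSum g S :=
  sum_congr rfl fun _ hπ => prod_congr rfl fun _ hP => h _ (subset_of_mem_partitionsOf hπ hP)

theorem partitionSum_empty (f : Finset α → R) : partitionSum f ∅ = 1 := by
  simp [partitionSum, partitionsOf_empty]

theorem partitionSum_ite_zero (p : Finset α → Prop) [DecidablePred p] (f : Finset α → R) :
    partitionSum (fun P => if p P then f P else 0) S =
      ∑ π ∈ partitionsOf S with ∀ P ∈ π, p P, ∏ P ∈ π, f P := by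
  simp only [partitionSum, prod_ite_zero, sum_filter]

theorem partitionSum_add (f g : Finset α → R) :
    partitionSum (fun P => f P + g P) S =
      ∑ A ∈ S.powerset, partitionSum f A * partitionSum g (S \ A) := by
  simp only [partitionSum, prod_add, sum_mul_sum, ← sum_product', sum_sigma']
  refine sum_bij' (fun x _ => ⟨x.2.biUnion id, x.2, x.1 \ x.2⟩)
    (fun y _ => ⟨y.2.1 ∪ y.2.2, y.2.1⟩) ?_ ?_ ?_ ?_ fun _ _ => rfl
  · rintro ⟨π, τ⟩ h
    obtain ⟨hπ, hτ⟩ : π ∈ partitionsOf S ∧ τ ⊆ π := by simpa using h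
    have hsub : τ.biUnion id ⊆ S :=
      biUnion_subset.2 fun P hP => subset_of_mem_partitionsOf hπ (hτ hP)
    simp [hsub, mem_partitionsOf_biUnion_of_subset hπ hτ, sdiff_mem_partitionsOf hπ hτ]
  · rintro ⟨A, σ, τ⟩ h
    obtain ⟨hA, hσ, hτ⟩ : A ⊆ S ∧ σ ∈ partitionsOf A ∧ τ ∈ partitionsOf (S \ A) := by
      simpa using h
    have hunion := union_mem_partitionsOf hσ hτ disjoint_sdiff
    rw [union_sdiff_of_subset hA] at hunion
    exact mem_sigma.2 ⟨hunion, mem_powerset.2 subset_union_left⟩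
  · rintro ⟨π, τ⟩ h
    have hτ : τ ⊆ π := (by simpa using h : π ∈ partitionsOf S ∧ τ ⊆ π).2
    simp [union_sdiff_of_subset hτ]
  · rintro ⟨A, σ, τ⟩ h
    obtain ⟨-, hσ, hτ⟩ : A ⊆ S ∧ σ ∈ partitionsOf A ∧ τ ∈ partitionsOf (S \ A) := by
      simpa using h
    have hdisj := disjoint_of_mem_partitionsOf hσ hτ disjoint_sdiff
    simp [union_sdiff_cancel_left hdisj, (mem_partitionsOf.1 hσ).2.2]

theorem partitionSum_eq_sum_filter (p : Finset α → Prop) [DecidablePred p] (f : Finset α → R) :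
    partitionSum f S =
      ∑ A ∈ S.powerset, (∑ σ ∈ partitionsOf A with ∀ P ∈ σ, p P, ∏ P ∈ σ, f P) *
        ∑ τ ∈ partitionsOf (S \ A) with ∀ P ∈ τ, ¬ p P, ∏ P ∈ τ, f P := by
  simp only [← partitionSum_ite_zero]
  rw [← partitionSum_add]
  exact partitionSum_congr fun P _ => by by_cases hP : p P <;> simp [hP]

theorem partitionSum_eq_sum_partitionsAvoiding (hBS : B ⊆ S) (f : Finset α → R) :
    partitionSum f S =
      ∑ A ∈ B.powerset, (∑ Δ ∈ partitionsAvoiding B (S \ A), ∏ Q ∈ Δ, f Q) *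
        partitionSum f A := by
  rw [partitionSum_eq_sum_filter (· ⊆ B)]
  refine (sum_subset_zero_on_sdiff (powerset_mono.2 hBS) (fun A hA => ?_) fun A hA => ?_).symm
  · have hAB : ¬ A ⊆ B := by simpa using (mem_sdiff.1 hA).2
    have hempty : {σ ∈ partitionsOf A | ∀ P ∈ σ, P ⊆ B} = ∅ :=
      filter_eq_empty_iff.2 fun σ hσ h =>
        hAB ((mem_partitionsOf.1 hσ).2.2 ▸ biUnion_subset.2 h)
    rw [hempty, sum_empty, zero_mul]
  · have hall : {σ ∈ partitionsOf A | ∀ P ∈ σ, P ⊆ B} = partitionsOf A :=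
      filter_true_of_mem fun σ hσ P hP =>
        (subset_of_mem_partitionsOf hσ hP).trans (mem_powerset.1 hA)
    rw [hall, mul_comm, partitionsAvoiding, partitionSum]

theorem partitionSum_insert {a : α} (ha : a ∉ S) (f : Finset α → R) :
    partitionSum f (insert a S) =
      ∑ Q ∈ S.powerset, f (insert a Q) * partitionSum f (S \ Q) := by
  rw [partitionSum_eq_sum_filter (a ∈ ·), sum_powerset_insert ha]
  have hnot_mem : ∀ A ∈ S.powerset,
      {τ ∈ partitionsOf (insert a S \ A) | ∀ P ∈ τ, a ∉ P} = ∅ := fun A hA => by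
    refine filter_eq_empty_iff.2 fun τ hτ h => ?_
    have haA : a ∈ insert a S \ A :=
      mem_sdiff.2 ⟨mem_insert_self a S, fun h => ha (mem_powerset.1 hA h)⟩
    obtain ⟨P, hP, haP⟩ := exists_mem_block_of_mem_partitionsOf hτ haA
    exact h P hP haP
  have hmem : ∀ Q ∈ S.powerset,
      {τ ∈ partitionsOf (insert a S \ insert a Q) | ∀ P ∈ τ, a ∉ P} = partitionsOf (S \ Q) :=
    fun Q _ => by
      rw [insert_sdiff_insert, sdiff_insert_of_notMem ha]
      exact filter_true_of_mem fun τ hτ P hP haP =>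
        ha (mem_sdiff.1 (subset_of_mem_partitionsOf hτ hP haP)).1
  rw [sum_eq_zero fun A hA => by rw [hnot_mem A hA, sum_empty, mul_zero], zero_add]
  refine sum_congr rfl fun Q hQ => ?_
  rw [hmem Q hQ, filter_forall_mem_partitionsOf (mem_insert_self a Q),
    sum_singleton, prod_singleton, partitionSum]

/-- The blocks of size `j + 1` containing a fixed one of `n + 1` elements contribute the factor
`n.choose j * j ! * (n - j)! = n !`, which is where the weights `(#P - 1)!` enter. -/
theorem partitionSum_eq_factorial_mul {e g : ℕ → R} {N : ℕ} (hg_zero : g 0 = 1)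
    (hg_succ : ∀ n < N,
      ((n + 1 : ℕ) : R) * g (n + 1) = ∑ j ∈ range (n + 1), e (j + 1) * g (n - j))
    (hS : #S ≤ N) :
    partitionSum (fun P => ((#P - 1).factorial : R) * e #P) S = (#S).factorial * g #S := by
  induction S using Finset.strongInduction with
  | H S ih =>
  rcases S.eq_empty_or_nonempty with rfl | ⟨a, ha⟩
  · simp [partitionSum_empty, hg_zero]
  obtain ⟨S, haS, rfl⟩ : ∃ T, a ∉ T ∧ insert a T = S :=
    ⟨S.erase a, notMem_erase a S, insert_erase ha⟩
  rw [card_insert_of_notMem haS] at hS ⊢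
  have hblock : ∀ Q ∈ S.powerset,
      ((#(insert a Q) - 1).factorial : R) * e #(insert a Q) *
          partitionSum (fun P => ((#P - 1).factorial : R) * e #P) (S \ Q) =
        (#Q).factorial * e (#Q + 1) * ((#S - #Q).factorial * g (#S - #Q)) := fun Q hQ => by
    have hQS := mem_powerset.1 hQ
    have hcard : #(S \ Q) = #S - #Q := card_sdiff_of_subset hQS
    rw [ih (S \ Q) (sdiff_subset.trans_ssubset (ssubset_insert haS)) (by omega), hcard,
      card_insert_of_notMem fun h => haS (hQS h), Nat.add_sub_cancel]
  rw [partitionSum_insert haS, sum_congr rfl hblock,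
    sum_powerset_apply_card fun j =>
      (j.factorial : R) * e (j + 1) * ((#S - j).factorial * g (#S - j)),
    Nat.factorial_succ, Nat.cast_mul, mul_right_comm, hg_succ _ (by omega), sum_mul]
  refine sum_congr rfl fun j hj => ?_
  rw [nsmul_eq_mul, ← Nat.choose_mul_factorial_mul_factorial (mem_range_succ_iff.1 hj)]
  push_cast
  ring

end PartitionSum

section WeightedTuples

variable {ι R : Type*} [Fintype ι] [DecidableEq ι] [CommSemiring R] {w : ι → ℕ} {t : ℕ}

/-- The tuples `i` of nonnegative integers with `∑ m, w m * i m = t`, where entries of weight `0`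
are required to vanish so that there are only finitely many; the box `i m ≤ t` is then
automatic. -/
def weightedTuples (w : ι → ℕ) (t : ℕ) : Finset (ι → ℕ) :=
  {i ∈ Fintype.piFinset fun _ => range (t + 1) |
    (∀ m, w m = 0 → i m = 0) ∧ ∑ m, w m * i m = t}

/-- The coefficient of `x ^ t` in `∏ m, ∑ n, φ m n * x ^ (w m * n)`, where a factor of weight `0`
contributes its term `n = 0` only. -/
def weightedTupleSum (w : ι → ℕ) (φ : ι → ℕ → R) (t : ℕ) : R :=
  ∑ i ∈ weightedTuples w t, ∏ m, φ m (i m)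

theorem mem_weightedTuples {i : ι → ℕ} :
    i ∈ weightedTuples w t ↔ (∀ m, w m = 0 → i m = 0) ∧ ∑ m, w m * i m = t := by
  rw [weightedTuples, mem_filter]
  refine and_iff_right_of_imp fun ⟨hzero, hsum⟩ => Fintype.mem_piFinset.2 fun m => ?_
  have hle : w m * i m ≤ t :=
    hsum ▸ single_le_sum (f := fun m => w m * i m) (fun _ _ => Nat.zero_le _) (mem_univ m)
  rw [mem_range_succ_iff]
  rcases Nat.eq_zero_or_pos (w m) with hm | hm
  · simp [hzero m hm]
  · exact (Nat.le_mul_of_pos_left _ hm).trans hle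

theorem weightedTuples_zero : weightedTuples w 0 = {0} := by
  ext i
  rw [mem_weightedTuples, mem_singleton, sum_eq_zero_iff]
  constructor
  · rintro ⟨hzero, hsum⟩
    funext m
    exact (Nat.mul_eq_zero.1 (hsum m (mem_univ m))).elim (hzero m) id
  · rintro rfl
    simp

theorem weightedTupleSum_zero {φ : ι → ℕ → R} (hφ : ∀ m, φ m 0 = 1) :
    weightedTupleSum w φ 0 = 1 := by
  simp [weightedTupleSum, weightedTuples_zero, hφ]

theorem weight_le_of_mem_weightedTuples {i : ι → ℕ} (hi : i ∈ weightedTuples w t) {m : ι}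
    (him : i m ≠ 0) : w m ≠ 0 ∧ w m ≤ t := by
  obtain ⟨hzero, hsum⟩ := mem_weightedTuples.1 hi
  refine ⟨mt (hzero m) him, (Nat.le_mul_of_pos_right _ (Nat.pos_of_ne_zero him)).trans ?_⟩
  exact hsum ▸ single_le_sum (f := fun m => w m * i m) (fun _ _ => Nat.zero_le _) (mem_univ m)

theorem add_single_mem_weightedTuples {m : ι} (hm : w m ≠ 0) {i : ι → ℕ} :
    i + Pi.single m 1 ∈ weightedTuples w (t + w m) ↔ i ∈ weightedTuples w t := by
  have hsum : ∑ l, w l * (i + Pi.single m 1 : ι → ℕ) l = ∑ l, w l * i l + w m := by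
    simp [mul_add, sum_add_distrib, Pi.single_apply]
  have hzero : ∀ l, w l = 0 → (i + Pi.single m 1 : ι → ℕ) l = i l := fun l hl => by
    have hlm : l ≠ m := by
      rintro rfl
      exact hm hl
    simp [hlm]
  simp +contextual only [mem_weightedTuples, hsum, hzero, Nat.add_right_cancel_iff]

theorem filter_ne_zero_weightedTuples {m : ι} (hm : w m ≠ 0) :
    {i ∈ weightedTuples w (t + w m) | i m ≠ 0} =
      (weightedTuples w t).map (addRightEmbedding (Pi.single m 1)) := by
  ext i
  simp only [mem_filter, mem_map, addRightEmbedding_apply]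
  constructor
  · rintro ⟨hi, him⟩
    have hcancel : i - Pi.single m 1 + Pi.single m 1 = i := by
      refine tsub_add_cancel_of_le fun l => ?_
      by_cases hl : l = m
      · subst hl
        simpa using Nat.one_le_iff_ne_zero.2 him
      · simp [hl]
    exact ⟨_, (add_single_mem_weightedTuples hm).1 (hcancel.symm ▸ hi), hcancel⟩
  · rintro ⟨i, hi, rfl⟩
    exact ⟨(add_single_mem_weightedTuples hm).2 hi, by simp⟩

theorem weight_mul_prod_add_single {e : ι → R} {φ : ι → ℕ → R} {m : ι}
    (hφ : ∀ n, ((w m * (n + 1) : ℕ) : R) * φ m (n + 1) = e m * φ m n) (i : ι → ℕ) :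
    ((w m * (i m + 1) : ℕ) : R) * ∏ l, φ l ((i + Pi.single m 1 : ι → ℕ) l) =
      e m * ∏ l, φ l (i l) := by
  have hrest : ∏ l ∈ univ.erase m, φ l ((i + Pi.single m 1 : ι → ℕ) l) =
      ∏ l ∈ univ.erase m, φ l (i l) :=
    prod_congr rfl fun l hl => by simp [ne_of_mem_erase hl]
  rw [← mul_prod_erase univ _ (mem_univ m), ← mul_prod_erase univ (fun l => φ l (i l)) (mem_univ m),
    hrest, ← mul_assoc, ← mul_assoc, ← hφ, Pi.add_apply, Pi.single_eq_same]

theorem sum_weightedTuples_mul_prod {e : ι → R} {φ : ι → ℕ → R} {m : ι} (hm : w m ≠ 0)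
    (hφ : ∀ n, ((w m * (n + 1) : ℕ) : R) * φ m (n + 1) = e m * φ m n) :
    ∑ i ∈ weightedTuples w (t + w m), ((w m * i m : ℕ) : R) * ∏ l, φ l (i l) =
      e m * weightedTupleSum w φ t := by
  have hsupport : ∀ i ∈ weightedTuples w (t + w m),
      ((w m * i m : ℕ) : R) * ∏ l, φ l (i l) ≠ 0 → i m ≠ 0 :=
    fun i _ => mt fun him => by simp [him]
  rw [← sum_filter_of_ne hsupport, filter_ne_zero_weightedTuples hm, sum_map, weightedTupleSum,
    mul_sum]
  refine sum_congr rfl fun i _ => ?_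
  simpa using weight_mul_prod_add_single hφ i

/-- The coefficientwise form of `x * dF/dx = (∑ m, e m * x ^ w m) * F` for
`F = ∏ m, exp (e m * x ^ w m / w m)`. -/
theorem natCast_mul_weightedTupleSum {e : ι → R} {φ : ι → ℕ → R}
    (hφ : ∀ m, w m ≠ 0 → ∀ n, ((w m * (n + 1) : ℕ) : R) * φ m (n + 1) = e m * φ m n) :
    (t : R) * weightedTupleSum w φ t =
      ∑ m with w m ≠ 0 ∧ w m ≤ t, e m * weightedTupleSum w φ (t - w m) := by
  calc (t : R) * weightedTupleSum w φ t
      = ∑ i ∈ weightedTuples w t, ∑ m, ((w m * i m : ℕ) : R) * ∏ l, φ l (i l) := by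
        rw [weightedTupleSum, mul_sum]
        refine sum_congr rfl fun i hi => ?_
        rw [← sum_mul, ← Nat.cast_sum, (mem_weightedTuples.1 hi).2]
    _ = ∑ m, ∑ i ∈ weightedTuples w t, ((w m * i m : ℕ) : R) * ∏ l, φ l (i l) := sum_comm
    _ = ∑ m with w m ≠ 0 ∧ w m ≤ t,
          ∑ i ∈ weightedTuples w t, ((w m * i m : ℕ) : R) * ∏ l, φ l (i l) := by
        rw [sum_filter_of_ne]
        refine fun m _ => Not.imp_symm fun hm => sum_eq_zero fun i hi => ?_
        have him : i m = 0 := by_contra fun h => hm (weight_le_of_mem_weightedTuples hi h)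
        simp [him]
    _ = ∑ m with w m ≠ 0 ∧ w m ≤ t, e m * weightedTupleSum w φ (t - w m) := by
        refine sum_congr rfl fun m hm => ?_
        obtain ⟨-, hm_ne, hm_le⟩ := mem_filter.1 hm
        rw [← sum_weightedTuples_mul_prod hm_ne (hφ m hm_ne), Nat.sub_add_cancel hm_le]

end WeightedTuples

section Gpoly

open Polynomial

/-- The weights of the entries of a tuple `(j, i)` in `Gpoly s`: `none` stands for `j` and `some m`
for `i m`. The entries `i 0` and `i 1` get weight `0`, which forces them to vanish. -/
def gpolyWeight (s : ℕ) : Option (Fin (s + 1)) → ℕ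
  | none => 1
  | some m => if m.1 < 2 then 0 else m

/-- The factors of the summands of `Gpoly s`, indexed as in `gpolyWeight`: the expansions of
`exp (T x)` and of `exp (ζ(m) x ^ m / m)`. -/
noncomputable def gpolyFactor (s : ℕ) : Option (Fin (s + 1)) → ℕ → ℝ[X]
  | none, n => X ^ n * C ((n.factorial : ℝ)⁻¹)
  | some m, n => C ((zetaVal m / (m : ℝ)) ^ n / (n.factorial : ℝ))

/-- The polynomial `G_t(T) / t!`, computed with tuples having the entries of those in `Gpoly s`;
it is independent of `s ≥ t`. -/
noncomputable def reducedGpoly (s t : ℕ) : ℝ[X] :=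
  weightedTupleSum (gpolyWeight s) (gpolyFactor s) t

theorem gpolyWeight_some_eq_zero_iff {s : ℕ} {m : Fin (s + 1)} :
    gpolyWeight s (some m) = 0 ↔ m.1 < 2 := by
  simp only [gpolyWeight]
  split_ifs <;> omega

theorem elim_mem_weightedTuples_gpolyWeight {s t j : ℕ} {i : Fin (s + 1) → ℕ} :
    (fun a : Option (Fin (s + 1)) => a.elim j i) ∈ weightedTuples (gpolyWeight s) t ↔
      (∀ m : Fin (s + 1), m.1 < 2 → i m = 0) ∧ j + ∑ m : Fin (s + 1), m.1 * i m = t := by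
  have hweight : (∀ m : Fin (s + 1), m.1 < 2 → i m = 0) →
      ∑ m, gpolyWeight s (some m) * i m = ∑ m : Fin (s + 1), m.1 * i m := fun hi =>
    sum_congr rfl fun m _ => by
      by_cases hm : m.1 < 2
      · simp [hi m hm]
      · simp [gpolyWeight, hm]
  have hnone : gpolyWeight s none = 1 := rfl
  simp only [mem_weightedTuples, Option.forall, gpolyWeight_some_eq_zero_iff, Fintype.sum_option,
    Option.elim, hnone, one_ne_zero, false_imp_iff, true_and, one_mul]
  exact and_congr_right fun hi => by rw [hweight hi]

theorem Gpoly_eq_factorial_mul_reducedGpoly (s : ℕ) :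
    Gpoly s = (s.factorial : ℝ[X]) * reducedGpoly s s := by
  rw [Gpoly, reducedGpoly, weightedTupleSum, sum_sigma']
  congr 1
  have helim : ∀ i : Option (Fin (s + 1)) → ℕ,
      (fun a => a.elim (i none) fun m => i (some m)) = i := fun i => by
    ext (_ | _) <;> rfl
  refine sum_nbij' (fun x a => a.elim x.1 x.2) (fun i => ⟨i none, fun m => i (some m)⟩)
    ?_ ?_ (fun _ _ => rfl) (fun i _ => helim i) ?_
  · rintro ⟨j, i⟩ h
    exact elim_mem_weightedTuples_gpolyWeight.2 (mem_filter.1 (mem_sigma.1 h).2).2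
  · intro i hi
    have hbox := Fintype.mem_piFinset.1 (mem_filter.1 hi).1
    rw [← helim i] at hi
    exact mem_sigma.2 ⟨hbox none, mem_filter.2
      ⟨Fintype.mem_piFinset.2 fun m => hbox (some m), elim_mem_weightedTuples_gpolyWeight.1 hi⟩⟩
  · rintro ⟨j, i⟩ -
    rw [Fintype.prod_option, mul_comm]
    rfl

theorem gpolyFactor_zero {s : ℕ} (a : Option (Fin (s + 1))) : gpolyFactor s a 0 = 1 := by
  cases a <;> simp [gpolyFactor]

theorem gpolyFactor_succ {s : ℕ} (a : Option (Fin (s + 1))) (ha : gpolyWeight s a ≠ 0) (n : ℕ) :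
    ((gpolyWeight s a * (n + 1) : ℕ) : ℝ[X]) * gpolyFactor s a (n + 1) =
      a.elim X (fun m => C (zetaVal m)) * gpolyFactor s a n := by
  have hn : (n.factorial : ℝ) ≠ 0 := by positivity
  have hn_succ : (n : ℝ) + 1 ≠ 0 := by positivity
  rcases a with _ | m
  · have hC : C ((n + 1 : ℕ) : ℝ) * C (((n + 1).factorial : ℝ)⁻¹) = C ((n.factorial : ℝ)⁻¹) := by
      rw [← C_mul, Nat.factorial_succ]
      congr 1
      push_cast
      field_simp
    simp only [gpolyWeight, gpolyFactor, Option.elim, one_mul, ← C_eq_natCast, ← hC, pow_succ]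
    ring
  · have hm : ¬ m.1 < 2 := fun h => ha (if_pos h)
    have hm_ne_zero : (m.1 : ℝ) ≠ 0 := Nat.cast_ne_zero.2 (by omega)
    simp only [gpolyWeight, gpolyFactor, Option.elim, if_neg hm, ← C_eq_natCast, ← C_mul]
    congr 1
    rw [Nat.factorial_succ, pow_succ]
    push_cast
    field_simp

theorem succ_mul_reducedGpoly {s t : ℕ} (ht : t < s) :
    ((t + 1 : ℕ) : ℝ[X]) * reducedGpoly s (t + 1) =
      ∑ j ∈ range (t + 1), Epoly (j + 1) * reducedGpoly s (t - j) := by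
  rw [reducedGpoly, natCast_mul_weightedTupleSum gpolyFactor_succ, sum_filter, Fintype.sum_option]
  have hsome : ∀ m : Fin (s + 1),
      (if gpolyWeight s (some m) ≠ 0 ∧ gpolyWeight s (some m) ≤ t + 1 then
        C (zetaVal m) * reducedGpoly s (t + 1 - gpolyWeight s (some m)) else 0) =
      if m.1 ∈ Ico 2 (t + 2) then Epoly m * reducedGpoly s (t + 1 - m) else 0 := fun m => by
    by_cases hm : m.1 < 2
    · rw [if_neg (by simp [gpolyWeight, hm]), if_neg (by simp [hm])]
    · have hm_ne_one : m.1 ≠ 1 := by omega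
      have hm_ne_zero : m ≠ 0 := by
        rintro rfl
        simp at hm
      simp [gpolyWeight, Epoly, hm, hm_ne_one, hm_ne_zero, Nat.lt_succ_iff, Nat.le_of_not_lt hm]
  have hIco : ∑ m ∈ range (s + 1),
      (if m ∈ Ico 2 (t + 2) then Epoly m * reducedGpoly s (t + 1 - m) else 0) =
      ∑ j ∈ range t, Epoly (j + 2) * reducedGpoly s (t - (j + 1)) := by
    have hsub : Ico 2 (t + 2) ⊆ range (s + 1) := fun m hm =>
      mem_range.2 ((mem_Ico.1 hm).2.trans_le (by omega))
    rw [← sum_filter, filter_mem_eq_inter, inter_eq_right.2 hsub, sum_Ico_eq_sum_range]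
    refine sum_congr rfl fun j _ => ?_
    congr 2 <;> omega
  rw [sum_range_succ', ← hIco, ← Fin.sum_univ_eq_sum_range, ← sum_congr rfl fun m _ => hsome m]
  simp [add_comm, gpolyWeight, Epoly, reducedGpoly]

end Gpoly

theorem partitionSum_Epoly_card {α : Type*} [DecidableEq α] (S : Finset α) :
    partitionSum (fun P => ((#P - 1).factorial : Polynomial ℝ) * Epoly #P) S = Gpoly #S := by
  rw [Gpoly_eq_factorial_mul_reducedGpoly]
  exact partitionSum_eq_factorial_mul (weightedTupleSum_zero gpolyFactor_zero)
    (fun _ => succ_mul_reducedGpoly) le_rfl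

section Index

variable {α : Type*} {k : α → ℕ} {P : Finset α}

theorem Epoly_sum_eq_Epoly_card (hP : ∀ p ∈ P, k p = 1) : Epoly (∑ p ∈ P, k p) = Epoly #P := by
  rw [card_eq_sum_ones, sum_congr rfl hP]

theorem Epoly_sum_eq_C_zetaVal (hk : ∀ p ∈ P, 1 ≤ k p) (hP : ∃ p ∈ P, k p ≠ 1) :
    Epoly (∑ p ∈ P, k p) = Polynomial.C (zetaVal (∑ p ∈ P, k p)) := by
  obtain ⟨p, hp, hkp⟩ := hP
  have hkp_le : k p ≤ ∑ p ∈ P, k p := single_le_sum (fun _ _ => Nat.zero_le _) hp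
  have hkp_pos := hk p hp
  exact if_neg (by omega)

theorem cbar_mul_prod {R : Type*} [CommSemiring R] (π : Finset (Finset α)) (f : Finset α → R) :
    (cbar π : R) * ∏ P ∈ π, f P = ∏ P ∈ π, ((#P - 1).factorial : R) * f P := by
  rw [cbar, Nat.cast_prod, prod_mul_distrib]

theorem harmonic_sum_decomposition_general [DecidableEq α] (S : Finset α) (k : α → ℕ)
    (hk : ∀ j ∈ S, 1 ≤ k j) :
    ∑ π ∈ partitionsOf S, (cbar π : Polynomial ℝ) * ∏ P ∈ π, Epoly (∑ p ∈ P, k p) =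
      ∑ A ∈ powerset {j ∈ S | k j = 1},
        ∑ Δ ∈ partitionsAvoiding {j ∈ S | k j = 1} (S \ A),
          (cbar Δ : Polynomial ℝ) *
            (∏ Q ∈ Δ, Polynomial.C (zetaVal (∑ q ∈ Q, k q))) * Gpoly #A := by
  simp only [cbar_mul_prod, ← sum_mul]
  rw [← partitionSum, partitionSum_eq_sum_partitionsAvoiding (filter_subset (k · = 1) S)]
  refine sum_congr rfl fun A hA => congrArg₂ _ ?_ ?_
  · refine sum_congr rfl fun Δ hΔ => prod_congr rfl fun Q hQ => ?_
    obtain ⟨hΔ_part, hΔ_avoid⟩ := mem_filter.1 hΔ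
    have hQS : Q ⊆ S := (subset_of_mem_partitionsOf hΔ_part hQ).trans sdiff_subset
    obtain ⟨q, hq, hqB⟩ := not_subset.1 (hΔ_avoid Q hQ)
    have hkq : k q ≠ 1 := fun h => hqB (mem_filter.2 ⟨hQS hq, h⟩)
    rw [Epoly_sum_eq_C_zetaVal (fun p hp => hk p (hQS hp)) ⟨q, hq, hkq⟩]
  · rw [← partitionSum_Epoly_card]
    exact partitionSum_congr fun P hP => by
      rw [Epoly_sum_eq_Epoly_card fun p hp => (mem_filter.1 (mem_powerset.1 hA (hP hp))).2]

end Index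

/-- For an index `K` of positive integers, not all `1`, and `B = {j : k_j = 1}`:
`Σ_{Π ∈ P(r)} c̄(Π) H(K;Π;T)
  = Σ_{A ⊆ B} Σ_{Δ ∈ P_B({1,…,r}∖A)} c̄(Δ) (∏_{Q ∈ Δ} ζ(Σ_{q ∈ Q} k_q)) G_{|A|}(T)`. -/
theorem harmonic_sum_decomposition {r : ℕ} (k : Fin r → ℕ) (hk : ∀ i, 1 ≤ k i)
    (hK : ¬ ∀ i, k i = 1)
    (B : Finset (Fin r)) (hB : B = Finset.univ.filter (fun j => k j = 1)) :
    ∑ π ∈ partitionsOf (Finset.univ : Finset (Fin r)),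
        (cbar π : Polynomial ℝ) * Hpoly k π =
      ∑ A ∈ B.powerset,
        ∑ Δ ∈ partitionsAvoiding B (Finset.univ \ A),
          (cbar Δ : Polynomial ℝ) *
            (∏ Q ∈ Δ, Polynomial.C (zetaVal (∑ q ∈ Q, k q))) *
              Gpoly A.card := by
  subst hB
  exact harmonic_sum_decomposition_general univ k fun j _ => hk j
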